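/- Let M be a Coxeter matrix on a countable type S with M s t = 0 or M s t ≥ 4 for all s ≠ t (extra-large type, 0 encoding ∞), let A be the associated Artin group with generators a : S → A, and let (a_{i_1}^{ε_1}, …, a_{i_k}^{ε_k}) be a word in the generators and their inverses (ε_j ∈ {+1, −1}) whose associated partition of {1, …, k} is a pair partition V. If a_{i_1}^{ε_1} · … · a_{i_k}^{ε_k} = 1 in A, then V is non-crossing. -/

import Mathlib

open Filter Topology

/-- The alternating word `s·t·s·t·⋯` with `m` factors (starting with `s`), as an element of the
free group on `S`. -/
def artinAltWord {S : Type*} (s t : S) (m : ℕ) : FreeGroup S :=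
  (List.ofFn fun j : Fin m => FreeGroup.of (if (j : ℕ) % 2 = 0 then s else t)).prod

/-- The Artin relators associated to a Coxeter matrix `M` : for each pair `s ≠ t` with
`2 ≤ M s t` (finite), the relator `alt(s, t, M s t) · alt(t, s, M s t)⁻¹` expressing
`s·t·s·⋯ = t·s·t·⋯` (both sides with `M s t` factors). -/
def artinRelators {S : Type*} (M : CoxeterMatrix S) : Set (FreeGroup S) :=
  {x | ∃ s t : S, s ≠ t ∧ 2 ≤ M s t ∧
    x = artinAltWord s t (M s t) * (artinAltWord t s (M s t))⁻¹}

/-- The Artin group associated to a Coxeter matrix `M`. -/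
abbrev ArtinGroup {S : Type*} (M : CoxeterMatrix S) : Type _ :=
  PresentedGroup (artinRelators M)

/-- The generators of the Artin group associated to `M`. -/
def artinGen {S : Type*} (M : CoxeterMatrix S) (s : S) : ArtinGroup M :=
  PresentedGroup.of s

/-!
Only the image of the word in the Coxeter group `W` matters, where every generator is an involution.
The number of occurrences modulo 2 of a reflection in the left inversion sequence of a word depends
only on the element of `W` that the word represents, because it is read off an action of `W` on the
subsets of `W`.

Let `v` be the subword between the two occurrences of `a`. The relation says that `s_a v s_a` is
the inverse of a product of letters other than `a`, and comparing left inversions of two words for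
`s_a v` shows that `s_a` commutes with `v`. A second comparison shows that then `v` is a product of
generators that commute with `s_a`. If the pair of `c` crosses that of `a`, then `c` occurs exactly
once in `v`, so `s_c` must be one of these generators; and the geometric representation shows that
distinct commuting generators have `M a c = 2`.
-/

section GeometricRepresentation

open Module Polynomial.Chebyshev

theorem sin_two_pi_div_pos {m : ℕ} (hm : 3 ≤ m) : 0 < Real.sin (2 * Real.pi / m) := by
  have hm3 : (3 : ℝ) ≤ m := by exact_mod_cast hm
  refine Real.sin_pos_of_pos_of_lt_pi (by positivity) ?_
  rw [div_lt_iff₀ (by positivity)]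
  nlinarith [Real.pi_pos]

theorem eval_S_two_cos_two_pi_div_eq_zero {m : ℕ} (hm : 3 ≤ m) {n : ℤ} (hn : 2 * (n + 1) = m) :
    (S ℝ n).eval (2 * Real.cos (2 * Real.pi / m)) = 0 := by
  have hangle : ((n : ℝ) + 1) * (2 * Real.pi / m) = Real.pi := by
    have hmn : 2 * ((n : ℝ) + 1) = m := by exact_mod_cast hn
    rw [← hmn]
    have hn0 : (n : ℝ) + 1 ≠ 0 := by exact_mod_cast (by lia : n + 1 ≠ 0)
    field_simp
  have h := S_two_mul_real_cos (2 * Real.pi / m) n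
  rw [hangle, Real.sin_pi] at h
  exact (mul_eq_zero.1 h).resolve_right (sin_two_pi_div_pos hm).ne'

theorem eval_S_add_S_two_cos_two_pi_div_eq_zero {m : ℕ} (hm : 3 ≤ m) {n : ℤ}
    (hn : 2 * n + 1 = m) :
    (S ℝ n).eval (2 * Real.cos (2 * Real.pi / m)) +
      (S ℝ (n - 1)).eval (2 * Real.cos (2 * Real.pi / m)) = 0 := by
  have hangle : ((n : ℝ) + 1) * (2 * Real.pi / m) =
      2 * Real.pi - (((n - 1 : ℤ) : ℝ) + 1) * (2 * Real.pi / m) := by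
    have hmn : 2 * (n : ℝ) + 1 = m := by exact_mod_cast hn
    have : (m : ℝ) ≠ 0 := by positivity
    push_cast
    field_simp
    linarith
  refine (mul_eq_zero.1 ?_).resolve_right (sin_two_pi_div_pos hm).ne'
  rw [add_mul, S_two_mul_real_cos, S_two_mul_real_cos, hangle, Real.sin_two_pi_sub,
    neg_add_cancel]

theorem reflection_mul_reflection_pow_eq_one {V : Type*} [AddCommGroup V] [Module ℝ V] {x y : V}
    {f g : Dual ℝ V} (hf : f x = 2) (hg : g y = 2) {m : ℕ} (hm : 3 ≤ m)
    (h : f y * g x = 4 * Real.cos (Real.pi / m) ^ 2) :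
    (reflection hf * reflection hg) ^ m = 1 := by
  have hcos : 2 * Real.cos (2 * Real.pi / m) = f y * g x - 2 := by
    rw [h, mul_div_assoc, Real.cos_two_mul]
    ring
  apply LinearEquiv.toLinearMap_injective
  rw [reflection_mul_reflection_pow hf hg m _ hcos]
  obtain ⟨p, hp | hp⟩ := Nat.even_or_odd' m
  · rw [show ((m : ℤ) - 2) / 2 = p - 1 by lia, show ((m : ℤ) - 1) / 2 = p - 1 by lia,
      eval_S_two_cos_two_pi_div_eq_zero hm (n := p - 1) (by lia)]
    simp
  · rw [show ((m : ℤ) - 2) / 2 = p - 1 by lia, show ((m : ℤ) - 1) / 2 = p by lia,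
      show ((m : ℤ) - 3) / 2 = p - 1 by lia, show (m : ℤ) / 2 = p by lia,
      eval_S_add_S_two_cos_two_pi_div_eq_zero hm (n := p) (by lia)]
    simp

theorem reflection_mul_reflection_sq_eq_one {R V : Type*} [CommRing R] [AddCommGroup V]
    [Module R V] {x y : V} {f g : Dual R V} (hf : f x = 2) (hg : g y = 2) (hfy : f y = 0)
    (hgx : g x = 0) : (reflection hf * reflection hg) ^ 2 = 1 := by
  ext v
  simp only [sq, LinearEquiv.mul_apply, reflection_apply, map_sub, map_smul, hf, hg, hfy, hgx,
    LinearEquiv.coe_one, id]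
  module

variable {B : Type*} (M : CoxeterMatrix B)

/-- Twice the Gram matrix of the bilinear form of the geometric representation. The diagonal
entries are `-2 * cos π = 2`, and an entry `M i j = ∞`, encoded by `0`, gives `-2 * cos 0 = -2`
because `π / 0 = 0`. -/
noncomputable def coxeterCartan (i j : B) : ℝ :=
  -2 * Real.cos (Real.pi / M i j)

theorem coxeterCartan_self (i : B) : coxeterCartan M i i = 2 := by
  simp [coxeterCartan]

theorem coxeterCartan_comm (i j : B) : coxeterCartan M i j = coxeterCartan M j i := by
  rw [coxeterCartan, M.symmetric, coxeterCartan]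

theorem coxeterCartan_eq_zero_iff {i j : B} : coxeterCartan M i j = 0 ↔ M i j = 2 := by
  rw [coxeterCartan, mul_eq_zero, or_iff_right (by norm_num)]
  refine ⟨fun h ↦ ?_, fun h ↦ by simp [h]⟩
  obtain ⟨k, hk⟩ := Real.cos_eq_zero_iff.1 h
  have hm0 : (M i j : ℝ) ≠ 0 := by
    intro hm
    simp [hm] at h
  have hmk : (M i j : ℤ) * (2 * k + 1) = 2 := by
    have : (M i j : ℝ) * (2 * k + 1) = 2 := by
      field_simp at hk
      linarith
    exact_mod_cast this
  have hdvd : M i j ∣ 2 := by exact_mod_cast Dvd.intro _ hmk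
  obtain h1 | h2 := (Nat.dvd_prime Nat.prime_two).1 hdvd
  · rw [h1] at hmk
    lia
  · exact h2

/-- The coroot of `i` in the geometric representation, as a linear form on `B →₀ ℝ`. -/
noncomputable def coxeterCoroot (i : B) : Dual ℝ (B →₀ ℝ) :=
  Finsupp.linearCombination ℝ (coxeterCartan M i)

theorem coxeterCoroot_single (i j : B) (r : ℝ) :
    coxeterCoroot M i (Finsupp.single j r) = r * coxeterCartan M i j := by
  simp [coxeterCoroot]

theorem coxeterCoroot_single_self (i : B) : coxeterCoroot M i (Finsupp.single i 1) = 2 := by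
  rw [coxeterCoroot_single, coxeterCartan_self, one_mul]

theorem isLiftable_reflection_coxeterCoroot :
    M.IsLiftable fun i ↦ reflection (coxeterCoroot_single_self M i) := by
  intro i j
  obtain h0 | h1 | h2 | h3 : M i j = 0 ∨ M i j = 1 ∨ M i j = 2 ∨ 3 ≤ M i j := by lia
  · rw [h0, pow_zero]
  · obtain rfl : i = j := by_contra fun hij ↦ M.off_diagonal i j hij h1
    rw [h1, pow_one]
    ext1 v
    exact involutive_reflection (coxeterCoroot_single_self M i) v
  · have hzero := (coxeterCartan_eq_zero_iff M).2 h2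
    rw [h2]
    apply reflection_mul_reflection_sq_eq_one
    · rw [coxeterCoroot_single, hzero, mul_zero]
    · rw [coxeterCoroot_single, coxeterCartan_comm, hzero, mul_zero]
  · refine reflection_mul_reflection_pow_eq_one _ _ h3 ?_
    rw [coxeterCoroot_single, coxeterCoroot_single, coxeterCartan_comm M j i, coxeterCartan]
    ring

variable {M} {W : Type*} [Group W] (cs : CoxeterSystem M W)

/-- The geometric representation of a Coxeter group on `B →₀ ℝ`. -/
noncomputable def geometricRep : W →* (B →₀ ℝ) ≃ₗ[ℝ] (B →₀ ℝ) :=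
  cs.lift ⟨_, isLiftable_reflection_coxeterCoroot M⟩

theorem geometricRep_simple_apply (i : B) (v : B →₀ ℝ) :
    geometricRep cs (cs.simple i) v = v - coxeterCoroot M i v • Finsupp.single i 1 := by
  rw [geometricRep, cs.lift_apply_simple, reflection_apply]

theorem eq_two_of_commute_simple {i j : B} (hij : i ≠ j)
    (h : Commute (cs.simple i) (cs.simple j)) : M i j = 2 := by
  rw [← coxeterCartan_eq_zero_iff, coxeterCartan_comm]
  have hcoord := congr_arg (fun w ↦ geometricRep cs w (Finsupp.single i 1) j) h.eq
  have hcartan : -coxeterCartan M j i = 2 * coxeterCartan M j i - coxeterCartan M j i := by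
    simpa [geometricRep_simple_apply, coxeterCoroot_single, coxeterCartan_self, hij] using hcoord
  linarith

end GeometricRepresentation

section ReflectionParity

open CoxeterSystem

variable {B W : Type*} [Group W] {M : CoxeterMatrix B} (cs : CoxeterSystem M W)

theorem prod_map_alternatingWord_two_mul {G : Type*} [Monoid G] (f : B → G) (i j : B) (p : ℕ) :
    ((alternatingWord i j (2 * p)).map f).prod = (f i * f j) ^ p := by
  induction p with
  | zero => simp [alternatingWord]
  | succ p ih =>
    rw [mul_add_one, alternatingWord_succ', alternatingWord_succ', pow_succ']
    simp [ih, mul_assoc]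

theorem leftInvSeq_alternatingWord_two_mul (i j : B) (p : ℕ) :
    cs.leftInvSeq (alternatingWord i j (2 * p)) =
      (List.range (2 * p)).map fun k ↦ cs.simple i * (cs.simple j * cs.simple i) ^ k := by
  refine List.ext_getElem (by simp) fun k hk _ ↦ ?_
  have hk' : k < 2 * p := by simpa using hk
  rw [cs.getElem_leftInvSeq_alternatingWord i j p k hk', prod_alternatingWord_eq_mul_pow]
  simp [show (2 * k + 1) / 2 = k by lia]

theorem exists_simple_mul_wordProd_eq_wordProd_eraseIdx {t : W} {ω : List B}
    (h : t ∈ cs.leftInvSeq ω) :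
    ∃ j < ω.length, t * cs.wordProd ω = cs.wordProd (ω.eraseIdx j) := by
  obtain ⟨j, hj, rfl⟩ := List.getElem_of_mem h
  refine ⟨j, by simpa using hj, ?_⟩
  rw [← cs.getD_leftInvSeq_mul_wordProd, List.getD_eq_getElem]

variable [DecidableEq W]

/-- The action of the generator `i` on subsets `A` of `W`, encoded by their indicator functions
`W → ZMod 2`, by `A ↦ {s i} ∆ s i * A * s i`. -/
def reflectionParityAct (i : B) : Function.End (W → ZMod 2) :=
  fun f t ↦ f (cs.simple i * t * cs.simple i) + if t = cs.simple i then 1 else 0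

theorem reflectionParityAct_smul_apply (i : B) (f : W → ZMod 2) (t : W) :
    (reflectionParityAct cs i • f) t =
      f (cs.simple i * t * cs.simple i) + if t = cs.simple i then 1 else 0 :=
  rfl

theorem count_leftInvSeq_cons (i : B) (ω : List B) (t : W) :
    (cs.leftInvSeq (i :: ω)).count t =
      (cs.leftInvSeq ω).count (cs.simple i * t * cs.simple i) +
        if t = cs.simple i then 1 else 0 := by
  have hconj : t = MulAut.conj (cs.simple i) (cs.simple i * t * cs.simple i) := by
    simp [MulAut.conj_apply, mul_assoc]
  rw [leftInvSeq, List.count_cons, ← List.count_map_of_injective (cs.leftInvSeq ω) _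
    (MulAut.conj (cs.simple i)).injective, ← hconj]
  simp only [beq_iff_eq, eq_comm (a := t)]

theorem prod_map_reflectionParityAct_smul_apply (ω : List B) (f : W → ZMod 2) (t : W) :
    ((ω.map (reflectionParityAct cs)).prod • f) t =
      f ((cs.wordProd ω)⁻¹ * t * cs.wordProd ω) + ((cs.leftInvSeq ω).count t : ZMod 2) := by
  induction ω generalizing t with
  | nil => simp
  | cons i ω ih =>
    rw [List.map_cons, List.prod_cons, mul_smul, reflectionParityAct_smul_apply, ih,
      count_leftInvSeq_cons, wordProd_cons]
    simp [mul_assoc, add_assoc]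

theorem even_count_leftInvSeq_alternatingWord (i j : B) (t : W) :
    Even ((cs.leftInvSeq (alternatingWord i j (2 * M i j))).count t) := by
  have hperiod (k : ℕ) :
      (cs.simple j * cs.simple i) ^ (M i j + k) = (cs.simple j * cs.simple i) ^ k := by
    rw [pow_add, cs.simple_mul_simple_pow', one_mul]
  rw [leftInvSeq_alternatingWord_two_mul, two_mul, List.range_add, List.map_append, List.map_map,
    List.count_append]
  simp only [Function.comp_def, hperiod, Even.add_self]

theorem isLiftable_reflectionParityAct : M.IsLiftable (reflectionParityAct cs) := by
  intro i j
  have hprod : cs.wordProd (alternatingWord i j (2 * M i j)) = 1 := by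
    rw [wordProd, prod_map_alternatingWord_two_mul, cs.simple_mul_simple_pow]
  have hsmul (f : W → ZMod 2) (t : W) :
      (((alternatingWord i j (2 * M i j)).map (reflectionParityAct cs)).prod • f) t = f t := by
    rw [prod_map_reflectionParityAct_smul_apply, hprod,
      (even_count_leftInvSeq_alternatingWord cs i j t).natCast_zmod_two]
    simp
  rw [← prod_map_alternatingWord_two_mul]
  exact funext fun f ↦ funext (hsmul f)

theorem count_leftInvSeq_cast_eq_of_wordProd_eq {ω ω' : List B}
    (h : cs.wordProd ω = cs.wordProd ω') (t : W) :
    ((cs.leftInvSeq ω).count t : ZMod 2) = (cs.leftInvSeq ω').count t := by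
  have hlift (ω : List B) : (ω.map (reflectionParityAct cs)).prod =
      cs.lift ⟨_, isLiftable_reflectionParityAct cs⟩ (cs.wordProd ω) := by
    simp [wordProd, map_list_prod, Function.comp_def, cs.lift_apply_simple]
  have hact : ((ω.map (reflectionParityAct cs)).prod • (0 : W → ZMod 2)) t =
      ((ω'.map (reflectionParityAct cs)).prod • (0 : W → ZMod 2)) t := by
    rw [hlift, hlift, h]
  simpa only [prod_map_reflectionParityAct_smul_apply, Pi.zero_apply, zero_add] using hact

theorem mem_leftInvSeq_of_wordProd_eq {ω ω' : List B} (h : cs.wordProd ω = cs.wordProd ω')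
    {t : W} (ht : Odd ((cs.leftInvSeq ω).count t)) : t ∈ cs.leftInvSeq ω' := by
  by_contra hmem
  have := count_leftInvSeq_cast_eq_of_wordProd_eq cs h t
  rw [ht.natCast_zmod_two, List.count_eq_zero_of_not_mem hmem] at this
  simp at this

theorem count_simple_leftInvSeq_cons {i : B} {ω : List B}
    (h : cs.simple i ∉ cs.leftInvSeq ω) :
    (cs.leftInvSeq (i :: ω)).count (cs.simple i) = 1 := by
  rw [count_leftInvSeq_cons]
  simp [List.count_eq_zero_of_not_mem h]

end ReflectionParity

section StandardParabolic

open CoxeterSystem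

variable {B W : Type*} [Group W] {M : CoxeterMatrix B} (cs : CoxeterSystem M W) {I J : Set B}

/-- The standard parabolic subgroup `W_I`, generated by the simple reflections indexed by `I`. -/
def standardParabolic (I : Set B) : Subgroup W :=
  Subgroup.closure (cs.simple '' I)

theorem simple_mem_standardParabolic {i : B} (hi : i ∈ I) :
    cs.simple i ∈ standardParabolic cs I :=
  Subgroup.subset_closure (Set.mem_image_of_mem _ hi)

theorem standardParabolic_mono (h : I ⊆ J) : standardParabolic cs I ≤ standardParabolic cs J :=
  Subgroup.closure_mono (Set.image_mono h)

theorem wordProd_mem_standardParabolic {ω : List B} (hω : ∀ i ∈ ω, i ∈ I) :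
    cs.wordProd ω ∈ standardParabolic cs I :=
  Subgroup.list_prod_mem _ <| List.forall_mem_map.2 fun i hi ↦
    simple_mem_standardParabolic cs (hω i hi)

theorem exists_wordProd_eq_of_mem_standardParabolic {w : W} (hw : w ∈ standardParabolic cs I) :
    ∃ ω : List B, (∀ i ∈ ω, i ∈ I) ∧ cs.wordProd ω = w := by
  induction hw using Subgroup.closure_induction_left with
  | one => exact ⟨[], by simp⟩
  | mul_left x hx y _ ih =>
    obtain ⟨i, hi, rfl⟩ := hx
    obtain ⟨ω, hω, rfl⟩ := ih
    exact ⟨i :: ω, List.forall_mem_cons.2 ⟨hi, hω⟩, cs.wordProd_cons i ω⟩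
  | inv_mul_cancel x hx y _ ih =>
    obtain ⟨i, hi, rfl⟩ := hx
    obtain ⟨ω, hω, rfl⟩ := ih
    exact ⟨i :: ω, List.forall_mem_cons.2 ⟨hi, hω⟩, by rw [cs.wordProd_cons, cs.inv_simple]⟩

theorem mem_standardParabolic_of_mem_leftInvSeq {ω : List B} (hω : ∀ i ∈ ω, i ∈ I) {t : W}
    (ht : t ∈ cs.leftInvSeq ω) : t ∈ standardParabolic cs I := by
  obtain ⟨j, -, hj⟩ := exists_simple_mul_wordProd_eq_wordProd_eraseIdx cs ht
  have herase : cs.wordProd (ω.eraseIdx j) ∈ standardParabolic cs I :=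
    wordProd_mem_standardParabolic cs fun i hi ↦ hω i (List.mem_of_mem_eraseIdx hi)
  rw [← hj] at herase
  exact (Subgroup.mul_mem_cancel_right _ (wordProd_mem_standardParabolic cs hω)).1 herase

theorem geometricRep_apply_eq_of_mem_standardParabolic {w : W} (hw : w ∈ standardParabolic cs I)
    {i : B} (hi : i ∉ I) (v : B →₀ ℝ) : geometricRep cs w v i = v i := by
  induction hw using Subgroup.closure_induction generalizing v with
  | mem x hx =>
    obtain ⟨j, hj, rfl⟩ := hx
    simp [geometricRep_simple_apply, ne_of_mem_of_not_mem hj hi]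
  | one => rw [map_one, LinearEquiv.coe_one, id]
  | mul x y _ _ hx hy => rw [map_mul, LinearEquiv.mul_apply, hx, hy]
  | inv x _ hx => rw [← hx, ← LinearEquiv.mul_apply, ← map_mul, mul_inv_cancel, map_one,
      LinearEquiv.coe_one, id]

theorem simple_mem_standardParabolic_iff {i : B} :
    cs.simple i ∈ standardParabolic cs I ↔ i ∈ I := by
  refine ⟨fun h ↦ ?_, simple_mem_standardParabolic cs⟩
  by_contra hi
  have hcoord := geometricRep_apply_eq_of_mem_standardParabolic cs h hi (Finsupp.single i 1)
  norm_num [geometricRep_simple_apply, coxeterCoroot_single_self] at hcoord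

theorem wordProd_append_cons_mem_standardParabolic_iff {p q : List B} (hp : ∀ i ∈ p, i ∈ I)
    (hq : ∀ i ∈ q, i ∈ I) (c : B) :
    cs.wordProd (p ++ c :: q) ∈ standardParabolic cs I ↔ c ∈ I := by
  rw [cs.wordProd_append, cs.wordProd_cons,
    Subgroup.mul_mem_cancel_left _ (wordProd_mem_standardParabolic cs hp),
    Subgroup.mul_mem_cancel_right _ (wordProd_mem_standardParabolic cs hq),
    simple_mem_standardParabolic_iff]

theorem simple_notMem_leftInvSeq {a : B} (ha : a ∉ I) {ω : List B} (hω : ∀ i ∈ ω, i ∈ I) :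
    cs.simple a ∉ cs.leftInvSeq ω := fun h ↦
  ha <| (simple_mem_standardParabolic_iff cs).1 (mem_standardParabolic_of_mem_leftInvSeq cs hω h)

end StandardParabolic

section Centralizer

open CoxeterSystem

variable {B W : Type*} [Group W] {M : CoxeterMatrix B} (cs : CoxeterSystem M W) {I : Set B} {a : B}

/- The only left inversion of `a :: ω` equal to `s a` is the first one, so `s a` is a left inversion
of the word `ω'.concat a` of the same element, necessarily the last one. -/
theorem commute_simple_of_conj_mem_standardParabolic (ha : a ∉ I) {v : W}
    (hv : v ∈ standardParabolic cs I)
    (hconj : cs.simple a * v * cs.simple a ∈ standardParabolic cs I) :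
    Commute (cs.simple a) v := by
  classical
  obtain ⟨ω, hω, rfl⟩ := exists_wordProd_eq_of_mem_standardParabolic cs hv
  obtain ⟨ω', hω', hx⟩ := exists_wordProd_eq_of_mem_standardParabolic cs hconj
  have hword : cs.wordProd (a :: ω) = cs.wordProd (ω'.concat a) := by
    rw [cs.wordProd_concat, hx, cs.simple_mul_simple_cancel_right, cs.wordProd_cons]
  have hmem := mem_leftInvSeq_of_wordProd_eq cs hword <|
    (count_simple_leftInvSeq_cons cs (simple_notMem_leftInvSeq cs ha hω)).symm ▸ odd_one
  rw [cs.leftInvSeq_concat, List.concat_eq_append, List.mem_append, List.mem_singleton] at hmem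
  have hfix := hmem.resolve_left (simple_notMem_leftInvSeq cs ha hω')
  rw [hx, eq_mul_inv_iff_mul_eq] at hfix
  simpa [mul_assoc, commute_iff_eq, eq_comm] using hfix

/- `s i` is a left inversion of `(i :: ω).concat a`, hence of `a :: i :: ω`, so that
`s a * s i * s a` is a left inversion of `i :: ω`. -/
theorem commute_simple_head_of_commute_wordProd_cons (ha : a ∉ I) {i : B} {ω : List B}
    (hi : i ∈ I) (hω : ∀ j ∈ ω, j ∈ I) (hmem : cs.simple i ∉ cs.leftInvSeq ω)
    (hcomm : Commute (cs.simple a) (cs.wordProd (i :: ω))) :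
    Commute (cs.simple a) (cs.simple i) := by
  classical
  have hiω : ∀ j ∈ i :: ω, j ∈ I := List.forall_mem_cons.2 ⟨hi, hω⟩
  have hword : cs.wordProd ((i :: ω).concat a) = cs.wordProd (a :: i :: ω) := by
    rw [cs.wordProd_concat, cs.wordProd_cons a, hcomm.eq]
  have hlast : cs.simple i ≠
      cs.wordProd (i :: ω) * cs.simple a * (cs.wordProd (i :: ω))⁻¹ := by
    intro h
    refine ha <| (simple_mem_standardParabolic_iff cs).1 ?_
    rw [← hcomm.eq, mul_inv_cancel_right] at h
    exact h ▸ simple_mem_standardParabolic cs hi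
  have hcount : (cs.leftInvSeq ((i :: ω).concat a)).count (cs.simple i) = 1 := by
    rw [cs.leftInvSeq_concat, List.concat_eq_append, List.count_append,
      count_simple_leftInvSeq_cons cs hmem, List.count_singleton]
    simp [hlast.symm]
  have hocc := mem_leftInvSeq_of_wordProd_eq cs hword (hcount.symm ▸ odd_one)
  rw [leftInvSeq, List.mem_cons, List.mem_map] at hocc
  obtain heq | ⟨x, hx, hxi⟩ := hocc
  · exact absurd ((simple_mem_standardParabolic_iff cs).1
      (heq ▸ simple_mem_standardParabolic cs hi)) ha
  · refine commute_simple_of_conj_mem_standardParabolic cs ha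
      (simple_mem_standardParabolic cs hi) ?_
    rw [← hxi]
    simpa [mul_assoc] using mem_standardParabolic_of_mem_leftInvSeq cs hiω hx

theorem wordProd_mem_standardParabolic_setOf_commute (ha : a ∉ I) {ω : List B}
    (hω : ∀ i ∈ ω, i ∈ I) (hcomm : Commute (cs.simple a) (cs.wordProd ω)) :
    cs.wordProd ω ∈ standardParabolic cs {i | Commute (cs.simple a) (cs.simple i)} := by
  induction hn : ω.length using Nat.strong_induction_on generalizing ω with
  | _ n ih =>
  cases ω with
  | nil => simp
  | cons i ω =>
    obtain ⟨hi, hωI⟩ := List.forall_mem_cons.1 hω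
    by_cases hmem : cs.simple i ∈ cs.leftInvSeq ω
    · obtain ⟨j, hj, herase⟩ := exists_simple_mul_wordProd_eq_wordProd_eraseIdx cs hmem
      rw [cs.wordProd_cons, herase] at hcomm ⊢
      refine ih _ ?_ (fun k hk ↦ hωI k (List.mem_of_mem_eraseIdx hk)) hcomm rfl
      grind
    · have hai := commute_simple_head_of_commute_wordProd_cons cs ha hi hωI hmem hcomm
      rw [cs.wordProd_cons] at hcomm ⊢
      refine mul_mem (simple_mem_standardParabolic cs hai) <|
        ih ω.length (by simp [← hn]) hωI ?_ rfl
      simpa using hai.inv_right.mul_right hcomm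

theorem commute_wordProd_of_wordProd_eq_one {u w v : List B} (hu : a ∉ u) (hw : a ∉ w)
    (hv : a ∉ v) (h : cs.wordProd (u ++ a :: (w ++ a :: v)) = 1) :
    Commute (cs.simple a) (cs.wordProd w) := by
  have hmem {ω : List B} (hω : a ∉ ω) : cs.wordProd ω ∈ standardParabolic cs {a}ᶜ :=
    wordProd_mem_standardParabolic cs fun _ hi ↦ ne_of_mem_of_not_mem hi hω
  have hconj : cs.simple a * cs.wordProd w * cs.simple a =
      (cs.wordProd u)⁻¹ * (cs.wordProd v)⁻¹ := by
    rw [eq_mul_inv_iff_mul_eq, eq_inv_iff_mul_eq_one, mul_eq_one_comm]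
    simpa [wordProd_append, wordProd_cons, mul_assoc] using h
  refine commute_simple_of_conj_mem_standardParabolic cs (I := {a}ᶜ) (by simp) (hmem hw) ?_
  exact hconj ▸ mul_mem (inv_mem (hmem hu)) (inv_mem (hmem hv))

theorem commute_simple_of_wordProd_crossing_eq_one {c : B} {u p q v : List B} (hac : a ≠ c)
    (hau : a ∉ u) (hap : a ∉ p) (haq : a ∉ q) (hav : a ∉ v) (hcp : c ∉ p) (hcq : c ∉ q)
    (h : cs.wordProd (u ++ a :: (p ++ c :: q ++ a :: v)) = 1) :
    Commute (cs.simple a) (cs.simple c) := by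
  have haw : a ∉ p ++ c :: q := by simp [hac, hap, haq]
  have hcomm := commute_wordProd_of_wordProd_eq_one cs hau haw hav h
  have hmem := wordProd_mem_standardParabolic_setOf_commute cs (I := {a}ᶜ) (by simp)
    (fun _ hi ↦ ne_of_mem_of_not_mem hi haw) hcomm
  by_contra hnot
  have hsub : {i | Commute (cs.simple a) (cs.simple i)} ⊆ ({c}ᶜ : Set B) := fun i hi hic ↦
    hnot (hic ▸ hi)
  exact (wordProd_append_cons_mem_standardParabolic_iff cs
    (fun _ hi ↦ ne_of_mem_of_not_mem hi hcp) (fun _ hi ↦ ne_of_mem_of_not_mem hi hcq) c).1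
    (standardParabolic_mono cs hsub hmem) rfl

end Centralizer

section CrossingWord

variable {α : Type*} [BEq α] [LawfulBEq α]

theorem exists_eq_append_of_sublist_of_count_eq_two {a c : α} {l : List α}
    (hsub : [a, c, a, c].Sublist l) (ha : l.count a = 2) (hc : l.count c = 2) (hac : a ≠ c) :
    ∃ u p q v, l = u ++ a :: (p ++ c :: q ++ a :: v) ∧
      a ∉ u ∧ a ∉ p ∧ a ∉ q ∧ a ∉ v ∧ c ∉ p ∧ c ∉ q := by
  obtain ⟨l₁, l', rfl, ha₁, hsub⟩ := List.cons_sublist_iff.1 hsub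
  obtain ⟨l₂, l', rfl, hc₂, hsub⟩ := List.cons_sublist_iff.1 hsub
  obtain ⟨l₃, l₄, rfl, ha₃, hc₄⟩ := List.cons_sublist_iff.1 hsub
  rw [List.singleton_sublist] at hc₄
  obtain ⟨u, p₁, rfl⟩ := List.append_of_mem ha₁
  obtain ⟨p₂, q₁, rfl⟩ := List.append_of_mem hc₂
  obtain ⟨q₂, v, rfl⟩ := List.append_of_mem ha₃
  have hc₄_pos := List.count_pos_iff.2 hc₄
  refine ⟨u, p₁ ++ p₂, q₁ ++ q₂, v ++ l₄, by simp, ?_⟩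
  simp only [List.count_append, List.count_cons_self, List.count_cons_of_ne hac,
    List.count_cons_of_ne hac.symm] at ha hc
  simp only [← List.count_eq_zero, List.count_append]
  lia

theorem count_ofFn {k : ℕ} (f : Fin k → α) (x : α) :
    (List.ofFn f).count x = Nat.card {j // f j = x} := by
  classical
  rw [Nat.card_eq_fintype_card, Fintype.card_subtype, List.ofFn_eq_map, List.count, List.countP_map,
    List.countP_eq_length_filter,
    ← List.toFinset_card_of_nodup ((List.nodup_finRange k).filter _)]
  congr 1
  ext j
  simp

end CrossingWord

theorem map_sublist_ofFn {α : Type*} {k : ℕ} (f : Fin k → α) {l : List (Fin k)}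
    (hl : l.Pairwise (· < ·)) : (l.map f).Sublist (List.ofFn f) := by
  have hnodup : l.Nodup := hl.imp ne_of_lt
  have hsubperm := hnodup.subperm fun j _ ↦ List.mem_finRange j
  rw [List.ofFn_eq_map]
  exact (List.sublist_of_subperm_of_pairwise hsubperm hl (List.pairwise_lt_finRange k)).map f

section ArtinToCoxeter

open CoxeterSystem

variable {S W : Type*} [Group W] {M : CoxeterMatrix S} (cs : CoxeterSystem M W)

theorem ofFn_ite_eq_alternatingWord (s t : S) (m : ℕ) :
    (List.ofFn fun j : Fin m ↦ if (j : ℕ) % 2 = 0 then s else t) =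
      if Even m then alternatingWord s t m else alternatingWord t s m := by
  refine List.ext_getElem (by split_ifs <;> simp) fun k hk _ ↦ ?_
  rw [List.length_ofFn] at hk
  split_ifs with hm <;>
    simp [getElem_alternatingWord _ _ _ _ hk, Nat.even_iff] <;> grind

theorem lift_simple_artinAltWord (s t : S) (m : ℕ) :
    FreeGroup.lift cs.simple (artinAltWord s t m) =
      cs.wordProd (if Even m then alternatingWord s t m else alternatingWord t s m) := by
  rw [artinAltWord, map_list_prod, List.map_ofFn, ← ofFn_ite_eq_alternatingWord, wordProd,
    List.map_ofFn]
  simp [Function.comp_def]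

theorem lift_simple_eq_one_of_mem_artinRelators {r : FreeGroup S} (hr : r ∈ artinRelators M) :
    FreeGroup.lift cs.simple r = 1 := by
  obtain ⟨s, t, -, -, rfl⟩ := hr
  have hbraid := cs.wordProd_braidWord_eq s t
  rw [braidWord, braidWord, M.symmetric t s] at hbraid
  rw [map_mul, map_inv, mul_inv_eq_one, lift_simple_artinAltWord, lift_simple_artinAltWord]
  split_ifs
  · exact hbraid
  · exact hbraid.symm

/-- The canonical projection from an Artin group to the associated Coxeter group, identifying each
generator with its inverse. -/
def artinToCoxeter : ArtinGroup M →* W :=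
  PresentedGroup.toGroup fun _ ↦ lift_simple_eq_one_of_mem_artinRelators cs

theorem artinToCoxeter_artinGen_zpow (s : S) {n : ℤ} (hn : Odd n) :
    artinToCoxeter cs (artinGen M s ^ n) = cs.simple s := by
  obtain ⟨m, rfl⟩ := hn
  rw [map_zpow, artinToCoxeter, artinGen, PresentedGroup.toGroup.of, zpow_add_one, zpow_mul,
    zpow_ofNat, cs.simple_sq, one_zpow, one_mul]

theorem artinToCoxeter_prod_ofFn {k : ℕ} (i : Fin k → S) {ε : Fin k → ℤ} (hε : ∀ j, Odd (ε j)) :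
    artinToCoxeter cs (List.ofFn fun j ↦ artinGen M (i j) ^ ε j).prod =
      cs.wordProd (List.ofFn i) := by
  rw [map_list_prod, List.map_ofFn, wordProd, List.map_ofFn]
  simp only [Function.comp_def, artinToCoxeter_artinGen_zpow cs _ (hε _)]

end ArtinToCoxeter

theorem artin_noncrossing_of_word_eq_one_general {S : Type*} (M : CoxeterMatrix S)
    {k : ℕ} (i : Fin k → S) (ε : Fin k → ℤ) (hε : ∀ j, Odd (ε j))
    (hprod : (List.ofFn fun j ↦ artinGen M (i j) ^ ε j).prod = 1)
    {a c b d : Fin k} (hac : a < c) (hcb : c < b) (hbd : b < d) (hab : i a = i b)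
    (hcd : i c = i d) (hne : i a ≠ i c) (ha : Nat.card {l // i l = i a} = 2)
    (hc : Nat.card {l // i l = i c} = 2) : M (i a) (i c) = 2 := by
  classical
  let cs := M.toCoxeterSystem
  have hword : cs.wordProd (List.ofFn i) = 1 := by
    rw [← artinToCoxeter_prod_ofFn cs i hε, hprod, map_one]
  have hsub : [i a, i c, i a, i c].Sublist (List.ofFn i) := by
    have := map_sublist_ofFn i (l := [a, c, b, d]) (by simp; lia)
    simpa [← hab, ← hcd] using this
  rw [← count_ofFn] at ha hc
  obtain ⟨u, p, q, v, hl, hau, hap, haq, hav, hcp, hcq⟩ :=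
    exists_eq_append_of_sublist_of_count_eq_two hsub ha hc hne
  exact eq_two_of_commute_simple cs hne <|
    commute_simple_of_wordProd_crossing_eq_one cs hne hau hap haq hav hcp hcq (hl ▸ hword)

/-- Let `M` be a Coxeter matrix of extra-large type (`M s t = 0` or `M s t ≥ 4` for `s ≠ t`,
`0` encoding `∞`) on a countable type `S`, with Artin group `A` and generators `a`.  If the
word `(a_{i₁}^{ε₁}, …, a_{i_k}^{ε_k})` defines a pair partition `V` (every fiber of `j ↦ i j`
has exactly two elements) and `a_{i₁}^{ε₁} ⋯ a_{i_k}^{ε_k} = 1` in `A`, then `V` is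
non-crossing. -/
theorem artin_noncrossing_of_word_eq_one {S : Type*} [Countable S]
    (M : CoxeterMatrix S) (hM : ∀ s t : S, s ≠ t → M s t = 0 ∨ 4 ≤ M s t)
    {k : ℕ} (i : Fin k → S) (ε : Fin k → ℤ) (hε : ∀ j, ε j = 1 ∨ ε j = -1)
    (hpair : ∀ j, Nat.card {l : Fin k // i l = i j} = 2)
    (hprod : (List.ofFn fun j => artinGen M (i j) ^ ε j).prod = 1) :
    ¬ ∃ a c b d : Fin k, a < c ∧ c < b ∧ b < d ∧
        i a = i b ∧ i c = i d ∧ i a ≠ i c := by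
  rintro ⟨a, c, b, d, hac, hcb, hbd, hab, hcd, hne⟩
  have htwo : M (i a) (i c) = 2 := artin_noncrossing_of_word_eq_one_general M i ε
    (fun j ↦ (hε j).elim (· ▸ odd_one) (· ▸ odd_neg_one)) hprod hac hcb hbd hab hcd hne
    (hpair a) (hpair c)
  have := hM _ _ hne
  lia
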